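/- arXiv:2410.13600 — 4 statements merged into one kernel-verified Lean document; each statement's English description precedes it below -/
import Mathlib

section
/- Let K be an algebraically closed field of characteristic p > 2, let t be an odd prime with t ≠ p, let ζ ∈ Kˣ be a primitive t-th root of unity, and set n := 2t. Then the map β : (Z_n × Z_n) × (Z_n × Z_n) → Kˣ defined on standard representatives by β((i,j),(k,l)) := (-1)^{ik+jl} · ζ^{jk} · ζ^{-il} is a well-defined bicharacter of Z_n × Z_n with values in Kˣ. -/
/-!
Reading exponents modulo `n`, the elements `ε = -1` and `ζ` define additive characters `ψ` and `χ`
of `ZMod n`, and `β g h = ψ (g.1 * h.1 + g.2 * h.2) * χ (g.2 * h.1 - g.1 * h.2)`. The argument of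
`χ` is a skew-symmetric form; that of `ψ` is symmetric, which serves as well because `ψ` is its own
inverse.
-/

/-- A bicharacter of `G` with values in `A`: a skew-symmetric map, multiplicative in each argument.
Multiplicativity in the first argument follows from the two fields, see
`IsBicharacter.map_add_left`. -/
structure IsBicharacter {G A : Type*} [Add G] [CommGroup A] (β : G → G → A) : Prop where
  skew : ∀ g h, β g h = (β h g)⁻¹
  map_add_right : ∀ g h k, β g (h + k) = β g h * β g k

section Bicharacter

variable {G A M : Type*} [Add G] [CommGroup A]

theorem IsBicharacter.map_add_left {β : G → G → A} (hβ : IsBicharacter β) (g h k : G) :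
    β (g + k) h = β g h * β k h := by
  rw [hβ.skew, hβ.map_add_right, mul_inv, ← hβ.skew, ← hβ.skew]

theorem IsBicharacter.mul {β γ : G → G → A} (hβ : IsBicharacter β) (hγ : IsBicharacter γ) :
    IsBicharacter fun g h => β g h * γ g h where
  skew g h := by rw [mul_inv, ← hβ.skew, ← hγ.skew]
  map_add_right g h k := by rw [hβ.map_add_right, hγ.map_add_right, mul_mul_mul_comm]

theorem isBicharacter_addChar_of_skew [AddGroup M] (χ : AddChar M A) {B : G → G → M}
    (hskew : ∀ g h, B g h = -B h g) (hadd : ∀ g h k, B g (h + k) = B g h + B g k) :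
    IsBicharacter fun g h => χ (B g h) where
  skew g h := by rw [hskew, AddChar.map_neg_eq_inv]
  map_add_right g h k := by rw [hadd, AddChar.map_add_eq_mul]

theorem isBicharacter_addChar_of_symm [AddMonoid M] {ψ : AddChar M A} (hψ : ∀ x, ψ x ^ 2 = 1)
    {B : G → G → M} (hsymm : ∀ g h, B g h = B h g)
    (hadd : ∀ g h k, B g (h + k) = B g h + B g k) :
    IsBicharacter fun g h => ψ (B g h) where
  skew g h := by
    rw [hsymm]
    exact eq_inv_of_mul_eq_one_left ((sq _).symm.trans (hψ _))
  map_add_right g h k := by rw [hadd, AddChar.map_add_eq_mul]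

end Bicharacter

theorem isBicharacter_prod_addChar {R A : Type*} [CommRing R] [CommGroup A] {ψ : AddChar R A}
    (hψ : ∀ x, ψ x ^ 2 = 1) (χ : AddChar R A) :
    IsBicharacter fun g h : R × R =>
      ψ (g.1 * h.1 + g.2 * h.2) * χ (g.2 * h.1 - g.1 * h.2) := by
  refine (isBicharacter_addChar_of_symm hψ (fun g h => ?_) fun g h k => ?_).mul
    (isBicharacter_addChar_of_skew χ (fun g h => ?_) fun g h k => ?_)
  · ring
  · rw [Prod.fst_add, Prod.snd_add]
    ring
  · ring
  · rw [Prod.fst_add, Prod.snd_add]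
    ring

theorem zmodChar_mul_apply {C : Type*} [CommMonoid C] {n : ℕ} [NeZero n] {ζ : C} (hζ : ζ ^ n = 1)
    (a b : ZMod n) : AddChar.zmodChar n hζ (a * b) = ζ ^ (a.val * b.val) := by
  rw [AddChar.zmodChar_apply, ZMod.val_mul, ← pow_eq_pow_mod _ hζ]

theorem stmt_4_general {A : Type*} [CommGroup A] {n : ℕ} [NeZero n] {ε ζ : A}
    (hε_sq : ε ^ 2 = 1) (hε : ε ^ n = 1) (hζ : ζ ^ n = 1)
    {β : ZMod n × ZMod n → ZMod n × ZMod n → A}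
    (hβ : ∀ g h, β g h =
      ε ^ (g.1.val * h.1.val + g.2.val * h.2.val) * ζ ^ (g.2.val * h.1.val) *
        ζ ^ (-((g.1.val * h.2.val : ℕ) : ℤ))) :
    IsBicharacter β := by
  let ψ := AddChar.zmodChar n hε
  let χ := AddChar.zmodChar n hζ
  have hψ (x : ZMod n) : ψ x ^ 2 = 1 := by
    rw [AddChar.zmodChar_apply, pow_right_comm, hε_sq, one_pow]
  have hβ_char : β = fun g h => ψ (g.1 * h.1 + g.2 * h.2) * χ (g.2 * h.1 - g.1 * h.2) := by
    funext g h
    rw [hβ, AddChar.map_add_eq_mul, AddChar.map_sub_eq_div]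
    simp only [ψ, χ, zmodChar_mul_apply, pow_add, zpow_neg, zpow_natCast, div_eq_mul_inv, mul_assoc]
  exact hβ_char ▸ isBicharacter_prod_addChar hψ χ

/-- For an algebraically closed field `K` of characteristic `p > 2`, an odd
prime `t ≠ p`, `ζ ∈ Kˣ` a primitive `t`-th root of unity, and `n := 2t`, the map
`β((i,j),(k,l)) := (-1)^(ik+jl) * ζ^(jk) * ζ^(-il)` (on standard representatives) is a
well-defined bicharacter of `Z_n × Z_n` with values in `Kˣ`. -/
theorem stmt_4 (K : Type*) [Field K] [IsAlgClosed K] (p : ℕ) (hchar : CharP K p)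
    (hp : 2 < p) (t : ℕ) (ht : t.Prime) (htodd : Odd t) (htp : t ≠ p)
    (ζ : Kˣ) (hζ : orderOf ζ = t) :
    ∀ β : ZMod (2 * t) × ZMod (2 * t) → ZMod (2 * t) × ZMod (2 * t) → Kˣ,
      (∀ g h, β g h =
        (-1 : Kˣ) ^ (g.1.val * h.1.val + g.2.val * h.2.val) * ζ ^ (g.2.val * h.1.val) *
          ζ ^ (-((g.1.val * h.2.val : ℕ) : ℤ))) →
      (∀ g h, β g h = (β h g)⁻¹) ∧
        (∀ g h k, β g (h + k) = β g h * β g k) ∧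
        (∀ g h k, β (g + k) h = β g h * β k h) := by
  intro β hβ
  have : NeZero t := ⟨ht.ne_zero⟩
  have hβ_bichar : IsBicharacter β := stmt_4_general neg_one_sq (even_two_mul t).neg_one_pow
    (orderOf_dvd_iff_pow_eq_one.mp (hζ ▸ dvd_mul_left t 2)) hβ
  exact ⟨hβ_bichar.skew, hβ_bichar.map_add_right, hβ_bichar.map_add_left⟩
end

section
/- Let K be a field, let G be an additive abelian group, and let α : G × G → Kˣ be a 2-cocycle. Then the map β : G × G → Kˣ defined by β(g,h) := α(g,h)·α(h,g)⁻¹ is a bicharacter of G; that is, β(g,h) = β(h,g)⁻¹, β(g,h+k) = β(g,h)·β(g,k), and β(g+k,h) = β(g,h)·β(k,h) for all g, h, k ∈ G. -/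
/-!
By commutativity of `G`, the cocycle identities at `(g, h, k)`, `(h, k, g)` and `(h, g, k)` share
the terms `α h k`, `α (g + h) k` and `α h (g + k)`. These cancel from the product of the three,
leaving `α g (h + k) * (α h g * α k g) = (α g h * α g k) * α (h + k) g`: additivity of `β` in the
second variable. Additivity in the first variable follows by antisymmetry.
-/

section Cocycle

variable {G A : Type*}

/-- `α` is a 2-cocycle with respect to the trivial action of `G` on `A`. It is written in curried
form on an additive `G`, unlike `groupCohomology.IsMulCocycle₂`. -/
def IsAddMulCocycle₂ [Add G] [Mul A] (α : G → G → A) : Prop :=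
  ∀ σ τ ν, α σ (τ + ν) * α τ ν = α (σ + τ) ν * α σ τ

/-- The antisymmetrization `(g, h) ↦ α g h / α h g` of a two-variable map `α` with values in a
multiplicative group. For a 2-cocycle it is the commutator pairing of the corresponding central
extension of an abelian group. -/
def skewQuotient [Div A] (α : G → G → A) (g h : G) : A := α g h / α h g

theorem inv_skewQuotient [DivisionMonoid A] (α : G → G → A) (g h : G) :
    (skewQuotient α g h)⁻¹ = skewQuotient α h g :=
  inv_div _ _

namespace IsAddMulCocycle₂

variable [AddCommMagma G]

theorem mul_add_right_eq [CancelCommMonoid A] {α : G → G → A} (hα : IsAddMulCocycle₂ α)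
    (g h k : G) :
    α g (h + k) * (α h g * α k g) = (α g h * α g k) * α (h + k) g := by
  have hghk : α g (h + k) * α h k = α (g + h) k * α g h := hα g h k
  have hhkg : α h (g + k) * α k g = α (h + k) g * α h k := add_comm g k ▸ hα h k g
  have hhgk : α h (g + k) * α g k = α (g + h) k * α h g := add_comm g h ▸ hα h g k
  refine mul_right_cancel (b := α h k * α (g + h) k * α h (g + k)) ?_
  calc α g (h + k) * (α h g * α k g) * (α h k * α (g + h) k * α h (g + k))
    _ = (α g (h + k) * α h k) * (α h (g + k) * α k g) * (α (g + h) k * α h g) := by ac_rfl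
    _ = (α (g + h) k * α g h) * (α (h + k) g * α h k) * (α h (g + k) * α g k) := by
      rw [hghk, hhkg, hhgk]
    _ = (α g h * α g k) * α (h + k) g * (α h k * α (g + h) k * α h (g + k)) := by ac_rfl

variable [CommGroup A] {α : G → G → A}

theorem skewQuotient_add_right (hα : IsAddMulCocycle₂ α) (g h k : G) :
    skewQuotient α g (h + k) = skewQuotient α g h * skewQuotient α g k := by
  simp only [skewQuotient]
  rw [div_mul_div_comm, div_eq_div_iff_mul_eq_mul]
  exact hα.mul_add_right_eq g h k

theorem skewQuotient_add_left (hα : IsAddMulCocycle₂ α) (g k h : G) :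
    skewQuotient α (g + k) h = skewQuotient α g h * skewQuotient α k h := by
  rw [← inv_skewQuotient, hα.skewQuotient_add_right, mul_inv, inv_skewQuotient, inv_skewQuotient]

end IsAddMulCocycle₂

theorem stmt_16_general [AddCommMagma G] [CommGroup A] {α : G → G → A}
    (hα : IsAddMulCocycle₂ α) {β : G → G → A} (hβ : ∀ g h, β g h = α g h * (α h g)⁻¹) :
    (∀ g h, β g h = (β h g)⁻¹) ∧
      (∀ g h k, β g (h + k) = β g h * β g k) ∧
      (∀ g h k, β (g + k) h = β g h * β k h) := by
  obtain rfl : β = skewQuotient α := funext₂ fun g h ↦ (hβ g h).trans (div_eq_mul_inv _ _).symm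
  exact ⟨fun g h ↦ (inv_skewQuotient α h g).symm, hα.skewQuotient_add_right,
    fun g h k ↦ hα.skewQuotient_add_left g k h⟩

end Cocycle

/-- If `α` is a 2-cocycle on an additive abelian group `G` with values in
`Kˣ`, then `β(g,h) := α(g,h) * α(h,g)⁻¹` is a bicharacter of `G`. -/
theorem stmt_16 (K : Type*) [Field K] (G : Type*) [AddCommGroup G]
    (α : G → G → Kˣ)
    (hα : ∀ σ τ ν : G, α σ (τ + ν) * α τ ν = α (σ + τ) ν * α σ τ)
    (β : G → G → Kˣ) (hβ : ∀ g h, β g h = α g h * (α h g)⁻¹) :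
    (∀ g h, β g h = (β h g)⁻¹) ∧
      (∀ g h k, β g (h + k) = β g h * β g k) ∧
      (∀ g h k, β (g + k) h = β g h * β k h) :=
  stmt_16_general hα hβ
end

section
/- (Scheunert's Lemma) Let K be a field, let G be a finite abelian group, and let β : G × G → Kˣ be a bicharacter of G with β(g,g) = 1 for every g ∈ G. Then there exists a 2-cocycle α : G × G → Kˣ such that β(g,h) = α(g,h)·α(h,g)⁻¹ for all g, h ∈ G. -/
/-!
Split a finitely generated abelian group into cyclic summands. An alternating form vanishes on each
of them, so its block matrix is skew-symmetric with zero diagonal blocks. Hence the form is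
`A - Aᵗ`, where `A` is its strictly upper triangular part for any ordering of the summands. In
multiplicative notation `A` is again bimultiplicative, and bimultiplicative maps are 2-cocycles.
-/

open scoped DirectSum

/-- Every alternating bilinear map `M × M → N` is of the form `A - A.flip` with `A` bilinear, that
is, antisymmetrization of bilinear maps is onto the alternating ones. This is a condition on `M`
only when multiplication by `2` on `N` is not bijective, as otherwise `A = B / 2` works. -/
def AntisymmetrizationSurjective (R M N : Type*) [CommRing R] [AddCommGroup M] [Module R M]
    [AddCommGroup N] [Module R N] : Prop :=
  ∀ B : M →ₗ[R] M →ₗ[R] N, B.IsAlt → ∃ A : M →ₗ[R] M →ₗ[R] N, A - A.flip = B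

theorem isAlt_eq_zero_of_surjective {R M N : Type*} [CommSemiring R] [AddCommMonoid M] [Module R M]
    [AddCommMonoid N] [Module R N] {f : R →ₗ[R] M} (hf : Function.Surjective f)
    {B : M →ₗ[R] M →ₗ[R] N} (hB : B.IsAlt) : B = 0 := by
  have f_eq_smul (r : R) : f r = r • f 1 := by rw [← map_smul, smul_eq_mul, mul_one]
  ext x y
  obtain ⟨r, rfl⟩ := hf x
  obtain ⟨s, rfl⟩ := hf y
  rw [f_eq_smul r, f_eq_smul s, LinearMap.map_smul₂, map_smul, hB.self_eq_zero, smul_zero,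
    smul_zero, LinearMap.zero_apply, LinearMap.zero_apply]

section UpperTriangular

variable {R ι N : Type*} {M : ι → Type*} [CommSemiring R] [LinearOrder ι]
  [∀ i, AddCommMonoid (M i)] [∀ i, Module R (M i)] [AddCommMonoid N] [Module R N]

open DirectSum

/-- The block upper triangular part of a bilinear map `B` on `⨁ i, M i`, with prescribed diagonal:
the `(i, j)` block is that of `B` if `i < j`, it is `D i` if `i = j`, and it is `0` if `j < i`. -/
noncomputable def upperTriangularPart (B : (⨁ i, M i) →ₗ[R] (⨁ i, M i) →ₗ[R] N)
    (D : ∀ i, M i →ₗ[R] M i →ₗ[R] N) : (⨁ i, M i) →ₗ[R] (⨁ i, M i) →ₗ[R] N :=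
  let strictPart := toModule R ι ((⨁ i, M i) →ₗ[R] N) fun i =>
    (B ∘ₗ lof R ι M i).compl₂ (DFinsupp.filterLinearMap R M (i < ·))
  let diagonalPart := toModule R ι ((⨁ i, M i) →ₗ[R] N) fun i =>
    (D i).compl₂ (component R ι M i)
  strictPart + diagonalPart

variable (B : (⨁ i, M i) →ₗ[R] (⨁ i, M i) →ₗ[R] N) (D : ∀ i, M i →ₗ[R] M i →ₗ[R] N)

theorem upperTriangularPart_lof (i : ι) (x : M i) (v : ⨁ i, M i) :
    upperTriangularPart B D (lof R ι M i x) v =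
      B (lof R ι M i x) (DFinsupp.filter (i < ·) v) + D i x (v i) := by
  rw [upperTriangularPart, LinearMap.add_apply, toModule_lof, toModule_lof]
  rfl

theorem upperTriangularPart_lof_lof_of_lt {i j : ι} (hij : i < j) (x : M i) (y : M j) :
    upperTriangularPart B D (lof R ι M i x) (lof R ι M j y) =
      B (lof R ι M i x) (lof R ι M j y) := by
  rw [upperTriangularPart_lof, ← single_eq_lof R j, DFinsupp.filter_single, if_pos hij,
    DFinsupp.single_eq_of_ne hij.ne, map_zero, add_zero]

theorem upperTriangularPart_lof_lof_self (i : ι) (x y : M i) :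
    upperTriangularPart B D (lof R ι M i x) (lof R ι M i y) = D i x y := by
  rw [upperTriangularPart_lof, ← single_eq_lof R i y, DFinsupp.filter_single, if_neg (lt_irrefl i),
    DFinsupp.single_eq_same, map_zero, zero_add]

theorem upperTriangularPart_lof_lof_of_gt {i j : ι} (hji : j < i) (x : M i) (y : M j) :
    upperTriangularPart B D (lof R ι M i x) (lof R ι M j y) = 0 := by
  rw [upperTriangularPart_lof, ← single_eq_lof R j, DFinsupp.filter_single, if_neg hji.not_gt,
    DFinsupp.single_eq_of_ne hji.ne', map_zero, map_zero, add_zero]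

end UpperTriangular

namespace AntisymmetrizationSurjective

variable {R M M' N : Type*} [CommRing R] [AddCommGroup M] [Module R M] [AddCommGroup M']
  [Module R M'] [AddCommGroup N] [Module R N]

theorem of_surjective {f : R →ₗ[R] M} (hf : Function.Surjective f) :
    AntisymmetrizationSurjective R M N := fun B hB =>
  ⟨0, by
    rw [isAlt_eq_zero_of_surjective hf hB, zero_sub, neg_eq_zero]
    rfl⟩

theorem of_linearEquiv (e : M ≃ₗ[R] M') (h : AntisymmetrizationSurjective R M N) :
    AntisymmetrizationSurjective R M' N := by
  intro B hB
  obtain ⟨A, hA⟩ := h (B.compl₁₂ e e) fun x => hB (e x)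
  refine ⟨A.compl₁₂ e.symm e.symm, ?_⟩
  ext x y
  simpa using LinearMap.congr_fun₂ hA (e.symm x) (e.symm y)

theorem prod (h : AntisymmetrizationSurjective R M N) (h' : AntisymmetrizationSurjective R M' N) :
    AntisymmetrizationSurjective R (M × M') N := by
  intro B hB
  let inl := LinearMap.inl R M M'
  let inr := LinearMap.inr R M M'
  obtain ⟨A, hA⟩ := h (B.compl₁₂ inl inl) fun x => hB (inl x)
  obtain ⟨A', hA'⟩ := h' (B.compl₁₂ inr inr) fun x => hB (inr x)
  let fst := LinearMap.fst R M M'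
  let snd := LinearMap.snd R M M'
  refine ⟨A.compl₁₂ fst fst + A'.compl₁₂ snd snd + B.compl₁₂ (inl ∘ₗ fst) (inr ∘ₗ snd), ?_⟩
  ext x y
  · simpa [inl, inr, fst, snd, ← Prod.zero_eq_mk] using LinearMap.congr_fun₂ hA x y
  · simp [inl, inr, fst, snd, ← Prod.zero_eq_mk]
  · simpa [inl, inr, fst, snd, ← Prod.zero_eq_mk] using hB.neg (inl y) (inr x)
  · simpa [inl, inr, fst, snd, ← Prod.zero_eq_mk] using LinearMap.congr_fun₂ hA' x y

theorem directSum {ι : Type*} {M : ι → Type*} [∀ i, AddCommGroup (M i)] [∀ i, Module R (M i)]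
    (h : ∀ i, AntisymmetrizationSurjective R (M i) N) :
    AntisymmetrizationSurjective R (⨁ i, M i) N := by
  classical
  let : LinearOrder ι := linearOrderOfSTO WellOrderingRel
  intro B hB
  let of := DirectSum.lof R ι M
  choose D hD using fun i => h i (B.compl₁₂ (of i) (of i)) fun x => hB (of i x)
  refine ⟨upperTriangularPart B D, ?_⟩
  ext i x j y
  change upperTriangularPart B D (of i x) (of j y) - upperTriangularPart B D (of j y) (of i x) =
    B (of i x) (of j y)
  rcases lt_trichotomy i j with hij | rfl | hji
  · rw [upperTriangularPart_lof_lof_of_lt B D hij, upperTriangularPart_lof_lof_of_gt B D hij,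
      sub_zero]
  · rw [upperTriangularPart_lof_lof_self, upperTriangularPart_lof_lof_self]
    exact LinearMap.congr_fun₂ (hD i) x y
  · rw [upperTriangularPart_lof_lof_of_gt B D hji, upperTriangularPart_lof_lof_of_lt B D hji,
      zero_sub, hB.neg]

theorem of_finite_of_isPrincipalIdealRing [IsDomain R] [IsPrincipalIdealRing R]
    [Module.Finite R M] : AntisymmetrizationSurjective R M N := by
  obtain ⟨n, ι, _, p, -, k, ⟨e⟩⟩ := Module.equiv_free_prod_directSum (R := R) (M := M)
  have free : AntisymmetrizationSurjective R (Fin n →₀ R) N :=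
    (directSum fun _ => of_surjective (f := LinearMap.id) Function.surjective_id).of_linearEquiv
      (finsuppLEquivDirectSum R R (Fin n)).symm
  have torsion : AntisymmetrizationSurjective R (⨁ i, R ⧸ Submodule.span R {p i ^ k i}) N :=
    directSum fun _ => of_surjective (Submodule.mkQ_surjective _)
  exact (free.prod torsion).of_linearEquiv e.symm

end AntisymmetrizationSurjective

section Bicharacter

variable {G A : Type*} [AddCommGroup G] [CommGroup A]

/-- A bimultiplicative map as a `ℤ`-bilinear map into the additive form of its target. -/
def bilinOfBimultiplicative (β : G → G → A) (map_add_right : ∀ g h k, β g (h + k) = β g h * β g k)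
    (map_add_left : ∀ g h k, β (g + k) h = β g h * β k h) :
    G →ₗ[ℤ] G →ₗ[ℤ] Additive A :=
  AddMonoidHom.toIntLinearMap <|
    AddMonoidHom.mk' (fun g =>
        (AddMonoidHom.mk' (fun h => Additive.ofMul (β g h)) (map_add_right g)).toIntLinearMap)
      fun g k => LinearMap.ext fun h => map_add_left g h k

theorem isTwoCocycle_of_bimultiplicative {G A : Type*} [Add G] [CommSemigroup A] {α : G → G → A}
    (map_add_right : ∀ g h k, α g (h + k) = α g h * α g k)
    (map_add_left : ∀ g h k, α (g + k) h = α g h * α k h) (σ τ ν : G) :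
    α σ (τ + ν) * α τ ν = α (σ + τ) ν * α σ τ := by
  rw [map_add_right, map_add_left]
  ac_rfl

theorem stmt_18_general [AddGroup.FG G] (β : G → G → A)
    (hβ_right : ∀ g h k, β g (h + k) = β g h * β g k)
    (hβ_left : ∀ g h k, β (g + k) h = β g h * β k h)
    (hdiag : ∀ g, β g g = 1) :
    ∃ α : G → G → A,
      (∀ g h k, α g (h + k) = α g h * α g k) ∧ (∀ g h k, α (g + k) h = α g h * α k h) ∧
      ∀ g h, β g h = α g h * (α h g)⁻¹ := by
  have : Module.Finite ℤ G := Module.Finite.iff_addGroup_fg.mpr ‹_›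
  obtain ⟨α, hα⟩ := AntisymmetrizationSurjective.of_finite_of_isPrincipalIdealRing
    (bilinOfBimultiplicative β hβ_right hβ_left) hdiag
  refine ⟨fun g h => (α g h).toMul, fun g h k => ?_, fun g h k => ?_, fun g h => ?_⟩
  · simp only [map_add, toMul_add]
  · simp only [LinearMap.map_add₂, toMul_add]
  · rw [← div_eq_mul_inv]
    exact (LinearMap.congr_fun₂ hα g h).symm

end Bicharacter

/-- Scheunert's Lemma: If `β` is a bicharacter of a finite abelian group `G`
with values in `Kˣ` satisfying `β(g,g) = 1` for all `g`, then there is a 2-cocycle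
`α : G × G → Kˣ` with `β(g,h) = α(g,h) * α(h,g)⁻¹` for all `g, h`. -/
theorem stmt_18 (K : Type*) [Field K] (G : Type*) [AddCommGroup G] [Fintype G]
    (β : G → G → Kˣ)
    (hβ_inv : ∀ g h, β g h = (β h g)⁻¹)
    (hβ_right : ∀ g h k, β g (h + k) = β g h * β g k)
    (hβ_left : ∀ g h k, β (g + k) h = β g h * β k h)
    (hdiag : ∀ g : G, β g g = 1) :
    ∃ α : G → G → Kˣ,
      (∀ σ τ ν : G, α σ (τ + ν) * α τ ν = α (σ + τ) ν * α σ τ) ∧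
      ∀ g h : G, β g h = α g h * (α h g)⁻¹ := by
  obtain ⟨α, hα_right, hα_left, hα⟩ := stmt_18_general β hβ_right hβ_left hdiag
  exact ⟨α, isTwoCocycle_of_bimultiplicative hα_right hα_left, hα⟩
end

section
/- Let K be an infinite field of characteristic p > 2. Then there exist a nontrivial finite abelian group H whose order is not divisible by p, and a bicharacter β : H × H → Kˣ such that β(g,g) = 1 for all g ∈ H, β is nondegenerate (for every s ≠ 0 in H there exists x ∈ H with β(s,x) ≠ 1), and the determinant of the H × H matrix over K with entries β(g,h) is nonzero. -/
/-! On `R × R`, for `R` a commutative ring with a primitive additive character `ψ`, the pairing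
`β(g, h) = ψ (g₁h₂ - g₂h₁)` is alternating and nondegenerate. Orthogonality of characters makes the
matrix of a nondegenerate bicharacter invertible up to the scalar `|H|`, so the nonvanishing of its
determinant and `p ∤ |H|` both come down to `|H| ≠ 0` in `K`. In characteristic other than `2`, `-1`
is a primitive square root of unity, so `R = ZMod 2` with `ψ a = (-1)^a` works: `|H| = 4 ≠ 0`. -/

/-- A bimultiplicative map `H × H → G`, curried: `β g` is the character `h ↦ β(g, h)`. Skew symmetry
is not built in; it follows from `β(g, g) = 1`. Nondegeneracy is injectivity of `β`. -/
abbrev Bicharacter (H G : Type*) [AddCommGroup H] [CommGroup G] :=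
  H →+ AddChar H G

namespace Bicharacter

section Basic

variable {H G : Type*} [AddCommGroup H] [CommGroup G]

lemma map_add_apply (β : Bicharacter H G) (g k h : H) : β (g + k) h = β g h * β k h := by
  rw [map_add, AddChar.add_apply]

lemma apply_eq_inv_swap {β : Bicharacter H G} (hβ : ∀ g, β g g = 1) (g h : H) :
    β g h = (β h g)⁻¹ := by
  refine eq_inv_of_mul_eq_one_left ?_
  calc β g h * β h g
      = β (g + h) (g + h) := by
        rw [map_add_apply, (β g).map_add_eq_mul, (β h).map_add_eq_mul, hβ, hβ, one_mul, mul_one]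
    _ = 1 := hβ (g + h)

lemma exists_apply_ne_one {β : Bicharacter H G} (hβ : Function.Injective β) {s : H}
    (hs : s ≠ 0) : ∃ x, β s x ≠ 1 :=
  AddChar.ne_zero_iff.mp ((map_ne_zero_iff β hβ).mpr hs)

end Basic

section DecompositionMatrix

variable {H K : Type*} [AddCommGroup H] [CommRing K]

/-- The decomposition matrix `(β(g, h))` of a bicharacter, with entries regarded in `K`. -/
def decompositionMatrix (β : Bicharacter H Kˣ) : Matrix H H K :=
  Matrix.of fun g h => ((β g h : Kˣ) : K)

variable [Fintype H] [DecidableEq H] [IsDomain K] {β : Bicharacter H Kˣ}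

lemma sum_apply_eq_ite (hβ : Function.Injective β) (g : H) :
    ∑ h, ((β g h : Kˣ) : K) = if g = 0 then (Fintype.card H : K) else 0 := by
  classical
  have coe_eq_zero_iff : (Units.coeHom K).compAddChar (β g) = 0 ↔ g = 0 := by
    rw [← map_eq_zero_iff β hβ, DFunLike.ext_iff, DFunLike.ext_iff]
    exact forall_congr' fun _ => Units.val_eq_one
  simp only [← coe_eq_zero_iff]
  exact AddChar.sum_eq_ite ((Units.coeHom K).compAddChar (β g))

lemma decompositionMatrix_mul_transpose_neg (hβ : Function.Injective β) :
    decompositionMatrix β * (decompositionMatrix (-β)).transpose =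
      (Fintype.card H : K) • (1 : Matrix H H K) := by
  ext g k
  calc ∑ h, ((β g h : Kˣ) : K) * (((-β) k h : Kˣ) : K)
      = ∑ h, ((β (g - k) h : Kˣ) : K) := by
        simp only [sub_eq_add_neg, map_add_apply, map_neg, AddMonoidHom.neg_apply, Units.val_mul]
    _ = if g = k then (Fintype.card H : K) else 0 := by
        rw [sum_apply_eq_ite hβ]
        simp only [sub_eq_zero]
    _ = ((Fintype.card H : K) • (1 : Matrix H H K)) g k := by
        simp only [Matrix.smul_apply, Matrix.one_apply, smul_eq_mul, mul_ite, mul_one, mul_zero]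

lemma det_decompositionMatrix_ne_zero (hβ : Function.Injective β)
    (hcard : (Fintype.card H : K) ≠ 0) : (decompositionMatrix β).det ≠ 0 := by
  have det_mul_det := congrArg Matrix.det (decompositionMatrix_mul_transpose_neg hβ)
  rw [Matrix.det_mul, Matrix.det_smul, Matrix.det_one, mul_one] at det_mul_det
  exact left_ne_zero_of_mul (det_mul_det ▸ pow_ne_zero _ hcard)

end DecompositionMatrix

section Symplectic

variable {R G : Type*} [CommRing R] [CommGroup G]

/-- The standard symplectic form `g₁h₂ - g₂h₁` on `R × R`, composed with an additive
character `ψ` of `R`. -/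
def symplectic (ψ : AddChar R G) : Bicharacter (R × R) G :=
  AddMonoidHom.mk'
    (fun g => ψ.compAddMonoidHom
      ((AddMonoidHom.mulLeft g.1).comp (AddMonoidHom.snd R R) -
        (AddMonoidHom.mulLeft g.2).comp (AddMonoidHom.fst R R)))
    fun g k => by
      ext h
      change ψ ((g.1 + k.1) * h.2 - (g.2 + k.2) * h.1) =
        ψ (g.1 * h.2 - g.2 * h.1) * ψ (k.1 * h.2 - k.2 * h.1)
      rw [← ψ.map_add_eq_mul]
      ring_nf

lemma symplectic_apply (ψ : AddChar R G) (g h : R × R) :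
    symplectic ψ g h = ψ (g.1 * h.2 - g.2 * h.1) :=
  rfl

lemma symplectic_self (ψ : AddChar R G) (g : R × R) : symplectic ψ g g = 1 := by
  rw [symplectic_apply, mul_comm g.2, sub_self, ψ.map_zero_eq_one]

lemma symplectic_injective {ψ : AddChar R G} (hψ : ψ.IsPrimitive) :
    Function.Injective (symplectic ψ) := by
  refine (injective_iff_map_eq_zero _).mpr fun g hg => ?_
  have apply_eq_one (h : R × R) : ψ (g.1 * h.2 - g.2 * h.1) = 1 := DFunLike.congr_fun hg h
  have fst_eq_zero : g.1 = 0 := by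
    by_contra hne
    refine hψ hne (DFunLike.ext _ _ fun x => ?_)
    simpa using apply_eq_one (0, x)
  have snd_eq_zero : g.2 = 0 := by
    by_contra hne
    refine hψ hne (DFunLike.ext _ _ fun x => ?_)
    simpa using apply_eq_one (-x, 0)
  exact Prod.ext fst_eq_zero snd_eq_zero

end Symplectic

end Bicharacter

open Bicharacter in
theorem stmt_19_general (K : Type*) [CommRing K] [IsDomain K] (p : ℕ) [CharP K p] (hp : p ≠ 2) :
    ∃ (H : Type) (_ : AddCommGroup H) (_ : Fintype H) (_ : DecidableEq H),
      Nontrivial H ∧ ¬ (p ∣ Fintype.card H) ∧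
      ∃ β : H → H → Kˣ,
        (∀ g h, β g h = (β h g)⁻¹) ∧
        (∀ g h k, β g (h + k) = β g h * β g k) ∧
        (∀ g h k, β (g + k) h = β g h * β k h) ∧
        (∀ g : H, β g g = 1) ∧
        (∀ s : H, s ≠ 0 → ∃ x : H, β s x ≠ 1) ∧
        Matrix.det (Matrix.of fun g h : H => ((β g h : Kˣ) : K)) ≠ 0 := by
  have neg_one_primitive : IsPrimitiveRoot (-1 : Kˣ) 2 :=
    IsPrimitiveRoot.coe_units_iff.mp (IsPrimitiveRoot.neg_one p hp)
  let β : Bicharacter (ZMod 2 × ZMod 2) Kˣ :=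
    symplectic (AddChar.zmodChar 2 neg_one_primitive.pow_eq_one)
  have β_self : ∀ g, β g g = 1 := symplectic_self _
  have β_injective : Function.Injective β :=
    symplectic_injective (AddChar.zmodChar_primitive_of_primitive_root 2 neg_one_primitive)
  have card_ne_zero : (Fintype.card (ZMod 2 × ZMod 2) : K) ≠ 0 := by
    have two_ne_zero : (2 : K) ≠ 0 := Ring.two_ne_zero ((ringChar.eq K p).symm ▸ hp)
    rw [Fintype.card_prod, ZMod.card, Nat.cast_mul, Nat.cast_ofNat]
    exact mul_ne_zero two_ne_zero two_ne_zero
  exact ⟨ZMod 2 × ZMod 2, inferInstance, inferInstance, inferInstance, inferInstance,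
    (CharP.cast_eq_zero_iff K p _).not.mp card_ne_zero, fun g h => β g h,
    apply_eq_inv_swap β_self, fun g => (β g).map_add_eq_mul, fun g h k => β.map_add_apply g k h,
    β_self, fun _ => exists_apply_ne_one β_injective,
    det_decompositionMatrix_ne_zero β_injective card_ne_zero⟩

/-- Over an infinite field `K` of characteristic `p > 2`, there exist a
nontrivial finite abelian group `H` of order not divisible by `p` and a bicharacter `β` of
`H` with `β(g,g) = 1` for all `g`, which is nondegenerate and whose decomposition matrix
`(β(g,h))` has nonzero determinant. -/
theorem stmt_19 (K : Type*) [Field K] [Infinite K] (p : ℕ) (hchar : CharP K p)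
    (hp : 2 < p) :
    ∃ (H : Type) (_ : AddCommGroup H) (_ : Fintype H) (_ : DecidableEq H),
      Nontrivial H ∧ ¬ (p ∣ Fintype.card H) ∧
      ∃ β : H → H → Kˣ,
        (∀ g h, β g h = (β h g)⁻¹) ∧
        (∀ g h k, β g (h + k) = β g h * β g k) ∧
        (∀ g h k, β (g + k) h = β g h * β k h) ∧
        (∀ g : H, β g g = 1) ∧
        (∀ s : H, s ≠ 0 → ∃ x : H, β s x ≠ 1) ∧
        Matrix.det (Matrix.of fun g h : H => ((β g h : Kˣ) : K)) ≠ 0 :=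
  stmt_19_general K p hp.ne'
end
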